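/- Let X be a real Banach space which is a universal BPB domain space (the pair (X,Z) has the Bishop–Phelps–Bollobás property for every real Banach space Z), and suppose X admits an equivalent strictly convex norm (there is a norm ‖·‖' on X, equivalent to the original norm, making X strictly convex). Then the set of extreme points of the closed unit ball B_X is dense in the unit sphere S_X. -/

import Mathlib

open scoped ENNReal

/-- A pair `(X, Y)` of normed spaces has the Bishop–Phelps–Bollobás property with the
function `η : (0,1) → (0,∞)` (encoded as `η : ℝ → ℝ`, relevant only on `(0,1)`). -/
def BPBpWith (X Y : Type*) [NormedAddCommGroup X] [NormedSpace ℝ X]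
    [NormedAddCommGroup Y] [NormedSpace ℝ Y] (η : ℝ → ℝ) : Prop :=
  ∀ ε ∈ Set.Ioo (0 : ℝ) 1, ∀ (T₀ : X →L[ℝ] Y) (x₀ : X),
    ‖T₀‖ = 1 → ‖x₀‖ = 1 → 1 - η ε < ‖T₀ x₀‖ →
      ∃ (S : X →L[ℝ] Y) (x : X),
        ‖x‖ = 1 ∧ ‖S‖ = 1 ∧ ‖S x‖ = 1 ∧ ‖x - x₀‖ < ε ∧ ‖S - T₀‖ < ε

/-- The pair `(X, Y)` has the Bishop–Phelps–Bollobás property. -/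
def HasBPBp (X Y : Type*) [NormedAddCommGroup X] [NormedSpace ℝ X]
    [NormedAddCommGroup Y] [NormedSpace ℝ Y] : Prop :=
  ∃ η : ℝ → ℝ, (∀ ε ∈ Set.Ioo (0 : ℝ) 1, 0 < η ε) ∧ BPBpWith X Y η

/-- Core step: operators into an `ℓ_∞`-sum of strictly convex spaces. -/
theorem bpb_core {X : Type*} [NormedAddCommGroup X] [NormedSpace ℝ X]
    (Z : ℕ → Type*) [∀ n, NormedAddCommGroup (Z n)] [∀ n, NormedSpace ℝ (Z n)]
    [∀ n, StrictConvexSpace ℝ (Z n)]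
    (hB : HasBPBp X (lp Z ∞)) (D : ℝ) (hD : 0 ≤ D)
    (L : ∀ n, X →ₗ[ℝ] Z n) (h1 : ∀ n x, ‖x‖ ≤ ‖L n x‖)
    (h2 : ∀ n x, ‖L n x‖ ≤ (1 + D * (1 / ((n : ℝ) + 1))) * ‖x‖) :
    Metric.sphere (0 : X) 1 ⊆
      closure (Set.extremePoints ℝ (Metric.closedBall (0 : X) 1)) := by
  intro x₀ hx₀
  have hx₀n : ‖x₀‖ = 1 := by simpa using hx₀
  obtain ⟨η, hη, hB⟩ := hB
  rw [Metric.mem_closure_iff]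
  intro ε hε
  set δ := min ε (1 / 2) with hδ
  have hδ0 : 0 < δ := lt_min hε (by norm_num)
  have hδ2 : δ ≤ 1 / 2 := min_le_right _ _
  have hδm : δ ∈ Set.Ioo (0 : ℝ) 1 := ⟨hδ0, by linarith⟩
  -- choose n
  have hlim : Filter.Tendsto (fun n : ℕ => (1 + D * (1 / ((n : ℝ) + 1)))⁻¹) Filter.atTop
      (nhds 1) := by
    have := ((tendsto_one_div_add_atTop_nhds_zero_nat (𝕜 := ℝ)).const_mul D).const_add 1
    have h := this.inv₀ (by simp)
    simpa using h
  have hmax : max (1 - η δ) (1 / 2) < 1 := max_lt (by linarith [hη δ hδm]) (by norm_num)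
  obtain ⟨n, hn⟩ := (hlim.eventually (lt_mem_nhds hmax)).exists
  set M := 1 + D * (1 / ((n : ℝ) + 1)) with hM
  have hM0 : 0 < M := by positivity
  let T : X →L[ℝ] lp Z ∞ := ((lp.lsingle (E := Z) (𝕜 := ℝ) ∞ n).comp (L n)).mkContinuous M (by
    intro x
    show ‖lp.single ∞ n (L n x)‖ ≤ _
    rw [lp.norm_single (by simp)]
    exact h2 n x)
  have hT : ∀ x, T x = lp.single ∞ n (L n x) := fun x => rfl
  have hTn : ∀ x, ‖T x‖ = ‖L n x‖ := fun x => by rw [hT, lp.norm_single (by simp)]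
  have hTM : ‖T‖ ≤ M := LinearMap.mkContinuous_norm_le _ hM0.le _
  have hT1 : 1 ≤ ‖T‖ := by
    have := T.le_opNorm x₀
    rw [hTn, hx₀n] at this
    have := h1 n x₀
    linarith
  have hTpos : 0 < ‖T‖ := by linarith
  have hinv : M⁻¹ ≤ ‖T‖⁻¹ := inv_anti₀ hTpos hTM
  have hlow : ∀ x, ‖T‖⁻¹ * ‖x‖ ≤ ‖(‖T‖⁻¹ • T) x‖ := by
    intro x
    rw [ContinuousLinearMap.smul_apply, norm_smul, norm_inv, norm_norm, hTn]
    gcongr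
    exact h1 n x
  obtain ⟨S, x, hx, hS, hSx, hxx, hST⟩ := hB δ hδm (‖T‖⁻¹ • T) x₀
    (by rw [norm_smul, norm_inv, norm_norm]; exact inv_mul_cancel₀ hTpos.ne') hx₀n
    (by
      have := hlow x₀
      rw [hx₀n, mul_one] at this
      exact ((le_max_left _ _).trans_lt hn).trans_le (hinv.trans this))
  have hhalf : 1 / 2 < ‖T‖⁻¹ := ((le_max_right _ _).trans_lt hn).trans_le hinv
  -- the difference
  have hdiff : ∀ (y : X) (k : ℕ), ‖(S y - (‖T‖⁻¹ • T) y) k‖ ≤ δ * ‖y‖ := by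
    intro y k
    calc _ ≤ ‖S y - (‖T‖⁻¹ • T) y‖ := lp.norm_apply_le_norm (by simp) _ k
      _ = ‖(S - ‖T‖⁻¹ • T) y‖ := by simp
      _ ≤ ‖S - ‖T‖⁻¹ • T‖ * ‖y‖ := ContinuousLinearMap.le_opNorm _ _
      _ ≤ _ := by gcongr
  have hTk : ∀ (y : X) (k : ℕ), k ≠ n → ((‖T‖⁻¹ • T) y) k = 0 := by
    intro y k hk
    rw [ContinuousLinearMap.smul_apply, hT, lp.coeFn_smul, Pi.smul_apply,
      lp.single_apply_ne _ _ _ hk, smul_zero]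
  have hTnn : ∀ (y : X), ‖T‖⁻¹ * ‖y‖ ≤ ‖((‖T‖⁻¹ • T) y) n‖ := by
    intro y
    rw [ContinuousLinearMap.smul_apply, hT, lp.coeFn_smul, Pi.smul_apply,
      lp.single_apply_self, norm_smul, norm_inv, norm_norm]
    gcongr
    exact h1 n y
  have hSle : ∀ y : X, ‖y‖ ≤ 1 → ‖S y n‖ ≤ 1 := by
    intro y hy
    calc ‖S y n‖ ≤ ‖S y‖ := lp.norm_apply_le_norm (by simp) _ n
      _ ≤ ‖S‖ * ‖y‖ := S.le_opNorm y
      _ ≤ 1 := by rw [hS, one_mul]; exact hy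
  have hSxn : ‖S x n‖ = 1 := by
    refine le_antisymm (hSle x hx.le) ?_
    by_contra! hlt
    have : ‖S x‖ ≤ max ‖S x n‖ (1 / 2) := by
      refine lp.norm_le_of_forall_le (by positivity) fun k => ?_
      by_cases hk : k = n
      · subst hk; exact le_max_left _ _
      · have h := hdiff x k
        rw [lp.coeFn_sub, Pi.sub_apply, hTk x k hk, sub_zero, hx, mul_one] at h
        exact (h.trans hδ2).trans (le_max_right _ _)
    rw [hSx] at this
    have h3 : max ‖S x n‖ (1 / 2) < 1 := max_lt hlt (by norm_num)
    linarith
  have hinj : ∀ y : X, S y n = 0 → y = 0 := by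
    intro y hy
    have h := hdiff y n
    rw [lp.coeFn_sub, Pi.sub_apply, hy, zero_sub, norm_neg] at h
    have h' := hTnn y
    by_contra hne
    have hpos : 0 < ‖y‖ := norm_pos_iff.2 hne
    have : ‖T‖⁻¹ ≤ δ := le_of_mul_le_mul_right (h'.trans h) hpos
    linarith
  refine ⟨x, ?_, ?_⟩
  · rw [mem_extremePoints_iff_left]
    refine ⟨by simp [hx], ?_⟩
    rintro u hu v hv ⟨a, b, ha, hb, hab, hc⟩
    rw [mem_closedBall_zero_iff] at hu hv
    have key : S u n = S v n := by
      by_contra hne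
      have hlt := norm_combo_lt_of_ne (hSle u hu) (hSle v hv) hne ha hb hab
      have he : S x n = a • S u n + b • S v n := by
        rw [← hc, map_add, map_smul, map_smul]
        rfl
      rw [← he, hSxn] at hlt
      exact lt_irrefl _ hlt
    have huv : u = v := by
      rw [← sub_eq_zero]
      apply hinj
      rw [map_sub, lp.coeFn_sub, Pi.sub_apply, key, sub_self]
    rw [← hc, ← huv, ← add_smul, hab, one_smul]
  · rw [dist_comm, dist_eq_norm]
    exact hxx.trans_le (min_le_left _ _)

/-- The graph of `t • e` in the `ℓ_2`-sum. -/
noncomputable def graphSub {X X' : Type*} [NormedAddCommGroup X] [NormedSpace ℝ X]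
    [NormedAddCommGroup X'] [NormedSpace ℝ X'] (f : X →L[ℝ] X') :
    Submodule ℝ (WithLp 2 (X × X')) where
  carrier := {p | p.snd = f p.fst}
  add_mem' := by
    intro a b ha hb
    simp only [Set.mem_setOf_eq] at *
    simp [ha, hb]
  zero_mem' := by simp
  smul_mem' := by
    intro c a ha
    simp only [Set.mem_setOf_eq] at *
    simp [ha]

theorem graphSub_complete {X X' : Type*} [NormedAddCommGroup X] [NormedSpace ℝ X]
    [NormedAddCommGroup X'] [NormedSpace ℝ X'] [CompleteSpace X] [CompleteSpace X']
    (f : X →L[ℝ] X') : CompleteSpace (graphSub f) := by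
  have : IsClosed (graphSub f : Set (WithLp 2 (X × X'))) := by
    have h : Continuous fun p : WithLp 2 (X × X') => p.ofLp :=
      WithLp.prod_continuous_ofLp 2 X X'
    exact isClosed_eq (continuous_snd.comp h) (f.continuous.comp (continuous_fst.comp h))
  exact this.completeSpace_coe

theorem graphSub_strictConvex {X X' : Type*} [NormedAddCommGroup X] [NormedSpace ℝ X]
    [NormedAddCommGroup X'] [NormedSpace ℝ X'] [StrictConvexSpace ℝ X']
    (f : X →L[ℝ] X') (hf : Function.Injective f) : StrictConvexSpace ℝ (graphSub f) := by
  refine StrictConvexSpace.of_norm_add_ne_two ?_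
  rintro ⟨p, hp⟩ ⟨q, hq⟩ h1 h2 hne h3
  apply hne
  change ‖p‖ = 1 at h1
  change ‖q‖ = 1 at h2
  change ‖p + q‖ = 2 at h3
  have e1 := WithLp.prod_norm_sq_eq_of_L2 p
  have e2 := WithLp.prod_norm_sq_eq_of_L2 q
  have e3 := WithLp.prod_norm_sq_eq_of_L2 (p + q)
  rw [h1] at e1
  rw [h2] at e2
  rw [h3, WithLp.add_fst, WithLp.add_snd] at e3
  have n1 := norm_add_le p.fst q.fst
  have n2 := norm_add_le p.snd q.snd
  have s1 := pow_le_pow_left₀ (norm_nonneg _) n1 2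
  have s2 := pow_le_pow_left₀ (norm_nonneg _) n2 2
  have hAB : ‖p.snd‖ = ‖q.snd‖ := by
    have : (‖p.snd‖ - ‖q.snd‖) ^ 2 = 0 := by
      nlinarith [sq_nonneg (‖p.snd‖ - ‖q.snd‖), sq_nonneg (‖p.fst‖ - ‖q.fst‖)]
    linarith [pow_eq_zero_iff (two_ne_zero) |>.1 this]
  have hsum : ‖p.snd + q.snd‖ = ‖p.snd‖ + ‖q.snd‖ := by
    refine le_antisymm n2 (abs_le_of_sq_le_sq' ?_ (norm_nonneg _)).2
    nlinarith [sq_nonneg (‖p.snd‖ - ‖q.snd‖), sq_nonneg (‖p.fst‖ - ‖q.fst‖)]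
  have hs := eq_of_norm_eq_of_norm_add_eq hAB hsum
  have hfst : p.fst = q.fst := by
    apply hf
    rw [← show p.snd = f p.fst from hp, ← show q.snd = f q.fst from hq, hs]
  apply Subtype.ext
  apply WithLp.ofLp_injective
  exact Prod.ext hfst hs

/-- If `X` is a universal BPB domain space and admits an equivalent strictly convex norm
(i.e. there is a strictly convex Banach space `X'` and a linear isomorphism `e : X ≃ₗ[ℝ] X'`
with `c‖x‖ ≤ ‖e x‖ ≤ C‖x‖`), then the extreme points of the closed unit ball of `X` are
dense in the unit sphere of `X`. -/
theorem extremePoints_dense_of_universal_BPB_domain.{u} (X : Type u)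
    [NormedAddCommGroup X] [NormedSpace ℝ X] [CompleteSpace X]
    (huniv : ∀ (Z : Type u) [NormedAddCommGroup Z] [NormedSpace ℝ Z] [CompleteSpace Z],
      HasBPBp X Z)
    (hren : ∃ (X' : Type u) (_ : NormedAddCommGroup X') (_ : NormedSpace ℝ X')
      (_ : CompleteSpace X') (_ : StrictConvexSpace ℝ X') (e : X ≃ₗ[ℝ] X') (c C : ℝ),
        0 < c ∧ 0 < C ∧ ∀ x : X, c * ‖x‖ ≤ ‖e x‖ ∧ ‖e x‖ ≤ C * ‖x‖) :
    Metric.sphere (0 : X) 1 ⊆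
      closure (Set.extremePoints ℝ (Metric.closedBall (0 : X) 1)) := by
  obtain ⟨X', _, _, _, _, e, c, C, hc, hC, he⟩ := hren
  let E : X →L[ℝ] X' := e.toLinearMap.mkContinuous C fun x => (he x).2
  have hE : ∀ x, E x = e x := fun x => rfl
  let f : ℕ → X →L[ℝ] X' := fun n => (1 / ((n : ℝ) + 1)) • E
  have hf : ∀ n x, f n x = (1 / ((n : ℝ) + 1)) • e x := fun n x => rfl
  have hinj : ∀ n, Function.Injective (f n) := by
    intro n x y hxy
    rw [hf, hf] at hxy
    have hne : (1 / ((n : ℝ) + 1)) ≠ 0 := by positivity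
    exact e.injective (smul_right_injective _ hne hxy)
  haveI : ∀ n, CompleteSpace (graphSub (f n)) := fun n => graphSub_complete _
  haveI : ∀ n, StrictConvexSpace ℝ (graphSub (f n)) := fun n =>
    graphSub_strictConvex _ (hinj n)
  let L : ∀ n, X →ₗ[ℝ] graphSub (f n) := fun n =>
    { toFun := fun x => ⟨WithLp.toLp 2 (x, f n x), rfl⟩
      map_add' := by
        intro x y
        apply Subtype.ext
        apply WithLp.ofLp_injective
        simp
      map_smul' := by
        intro a x
        apply Subtype.ext
        apply WithLp.ofLp_injective
        simp }
  have hL : ∀ n x, ‖L n x‖ ^ 2 = ‖x‖ ^ 2 + ‖f n x‖ ^ 2 := fun n x =>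
    WithLp.prod_norm_sq_eq_of_L2 (WithLp.toLp 2 (x, f n x))
  refine bpb_core (fun n => graphSub (f n)) (huniv _) C hC.le L ?_ ?_
  · intro n x
    refine (abs_le_of_sq_le_sq' ?_ (norm_nonneg _)).2
    rw [hL]
    nlinarith [sq_nonneg ‖f n x‖]
  · intro n x
    have hfn : ‖f n x‖ ≤ (1 / ((n : ℝ) + 1)) * (C * ‖x‖) := by
      rw [hf, norm_smul, Real.norm_of_nonneg (by positivity)]
      gcongr
      exact (he x).2
    have : ‖L n x‖ ≤ ‖x‖ + ‖f n x‖ := by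
      refine (abs_le_of_sq_le_sq' ?_ (by positivity)).2
      rw [hL]
      nlinarith [mul_nonneg (norm_nonneg x) (norm_nonneg (f n x))]
    calc _ ≤ _ := this
      _ ≤ ‖x‖ + (1 / ((n : ℝ) + 1)) * (C * ‖x‖) := by gcongr
      _ = _ := by ring
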